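/- Under the adapted pure-frontal setup with focal data, assume moreover that x_j is nowhere zero (so e_j = x_j/‖x_j‖ is a unit normal of C_j). Then for j = 1,2, a point q is a singular point of the focal surface C_j (i.e. rank d(C_j)_q ≤ 1) if and only if (V_jρ_j)(q) = 0, where V_jρ_j = −v(M̃−κ_jF̃)·(ρ_j)_u + (L̃−κ_jẼ)·(ρ_j)_v is the derivative of ρ_j along the principal vector field V_j. -/

import Mathlib

open Filter

noncomputable section

/-- Vectors in ℝ³, modeled as `Fin 3 → ℝ`. -/
abbrev R3 : Type := Fin 3 → ℝ

/-- The Euclidean inner product on ℝ³. -/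
def dot3 (a b : R3) : ℝ := a 0 * b 0 + a 1 * b 1 + a 2 * b 2

/-- The Euclidean norm on ℝ³. -/
def norm3 (a : R3) : ℝ := Real.sqrt (dot3 a a)

/-- Partial derivative in the `u`-direction. -/
def pu {E : Type*} [NormedAddCommGroup E] [NormedSpace ℝ E] (F : ℝ × ℝ → E) (p : ℝ × ℝ) : E :=
  fderiv ℝ F p (1, 0)

/-- Partial derivative in the `v`-direction. -/
def pv {E : Type*} [NormedAddCommGroup E] [NormedSpace ℝ E] (F : ℝ × ℝ → E) (p : ℝ × ℝ) : E :=
  fderiv ℝ F p (0, 1)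

/-- The adapted pure-frontal setup: `f` is a frontal with unit normal `ν`,
`f_v = v·h`, `ν_v = v·ν₁`, the frame `{f_u, h, ν}` is linearly independent everywhere
and orthonormal along the `u`-axis. -/
structure AdaptedPureFrontal (f ν h ν₁ : ℝ × ℝ → R3) : Prop where
  smooth_f : ContDiff ℝ (⊤ : ℕ∞) f
  smooth_ν : ContDiff ℝ (⊤ : ℕ∞) ν
  smooth_h : ContDiff ℝ (⊤ : ℕ∞) h
  smooth_ν₁ : ContDiff ℝ (⊤ : ℕ∞) ν₁
  unit_ν : ∀ p, dot3 (ν p) (ν p) = 1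
  orth_fu_ν : ∀ p, dot3 (pu f p) (ν p) = 0
  orth_fv_ν : ∀ p, dot3 (pv f p) (ν p) = 0
  fv_eq : ∀ p : ℝ × ℝ, pv f p = p.2 • h p
  νv_eq : ∀ p : ℝ × ℝ, pv ν p = p.2 • ν₁ p
  indep : ∀ p, LinearIndependent ℝ ![pu f p, h p, ν p]
  adapted_fu : ∀ u : ℝ, dot3 (pu f (u, 0)) (pu f (u, 0)) = 1
  adapted_h : ∀ u : ℝ, dot3 (h (u, 0)) (h (u, 0)) = 1
  adapted_fu_h : ∀ u : ℝ, dot3 (pu f (u, 0)) (h (u, 0)) = 0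
  adapted_h_ν : ∀ u : ℝ, dot3 (h (u, 0)) (ν (u, 0)) = 0

/-- Ẽ = ⟨f_u, f_u⟩. -/
def Et (f : ℝ × ℝ → R3) (p : ℝ × ℝ) : ℝ := dot3 (pu f p) (pu f p)

/-- F̃ = ⟨f_u, h⟩. -/
def Ft (f h : ℝ × ℝ → R3) (p : ℝ × ℝ) : ℝ := dot3 (pu f p) (h p)

/-- G̃ = ⟨h, h⟩. -/
def Gt (h : ℝ × ℝ → R3) (p : ℝ × ℝ) : ℝ := dot3 (h p) (h p)

/-- L̃ = −⟨f_u, ν_u⟩. -/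
def Lt (f ν : ℝ × ℝ → R3) (p : ℝ × ℝ) : ℝ := -dot3 (pu f p) (pu ν p)

/-- M̃ = −⟨h, ν_u⟩. -/
def Mt (h ν : ℝ × ℝ → R3) (p : ℝ × ℝ) : ℝ := -dot3 (h p) (pu ν p)

/-- Ñ₁ = −⟨h, ν₁⟩. -/
def Nt1 (h ν₁ : ℝ × ℝ → R3) (p : ℝ × ℝ) : ℝ := -dot3 (h p) (ν₁ p)

/-- The Gaussian curvature K = (L̃Ñ₁ − M̃²)/(ẼG̃ − F̃²). -/
def Kg (f ν h ν₁ : ℝ × ℝ → R3) (p : ℝ × ℝ) : ℝ :=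
  (Lt f ν p * Nt1 h ν₁ p - Mt h ν p ^ 2) / (Et f p * Gt h p - Ft f h p ^ 2)

/-- The mean curvature H = (ẼÑ₁ − 2F̃M̃ + G̃L̃)/(2(ẼG̃ − F̃²)). -/
def Hm (f ν h ν₁ : ℝ × ℝ → R3) (p : ℝ × ℝ) : ℝ :=
  (Et f p * Nt1 h ν₁ p - 2 * Ft f h p * Mt h ν p + Gt h p * Lt f ν p) /
    (2 * (Et f p * Gt h p - Ft f h p ^ 2))

/-- The principal curvature κ = H + ε√(H² − K); `ε = 1` gives κ₁ and `ε = -1` gives κ₂. -/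
def kap (f ν h ν₁ : ℝ × ℝ → R3) (ε : ℝ) (p : ℝ × ℝ) : ℝ :=
  Hm f ν h ν₁ p + ε * Real.sqrt (Hm f ν h ν₁ p ^ 2 - Kg f ν h ν₁ p)

/-- First component of the principal vector field V = −v(M̃ − κF̃)∂_u + (L̃ − κẼ)∂_v. -/
def V1c (f ν h ν₁ : ℝ × ℝ → R3) (ε : ℝ) (p : ℝ × ℝ) : ℝ :=
  -(p.2 * (Mt h ν p - kap f ν h ν₁ ε p * Ft f h p))

/-- Second component of the principal vector field V = −v(M̃ − κF̃)∂_u + (L̃ − κẼ)∂_v. -/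
def V2c (f ν h ν₁ : ℝ × ℝ → R3) (ε : ℝ) (p : ℝ × ℝ) : ℝ :=
  Lt f ν p - kap f ν h ν₁ ε p * Et f p

/-- Directional derivative of `g` along the principal vector field V. -/
def VD (f ν h ν₁ : ℝ × ℝ → R3) (ε : ℝ) {E : Type*} [NormedAddCommGroup E] [NormedSpace ℝ E]
    (g : ℝ × ℝ → E) (p : ℝ × ℝ) : E :=
  V1c f ν h ν₁ ε p • pu g p + V2c f ν h ν₁ ε p • pv g p

/-- The radius of principal curvature ρ = 1/κ. -/
def rho (f ν h ν₁ : ℝ × ℝ → R3) (ε : ℝ) (p : ℝ × ℝ) : ℝ := (kap f ν h ν₁ ε p)⁻¹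

/-- The focal surface C = f + ρ·ν. -/
def Cf (f ν h ν₁ : ℝ × ℝ → R3) (ε : ℝ) (p : ℝ × ℝ) : R3 :=
  f p + rho f ν h ν₁ ε p • ν p

/-- The normal direction x = −(M̃ − κF̃)·f_u + (L̃ − κẼ)·h of the focal surface. -/
def xj (f ν h ν₁ : ℝ × ℝ → R3) (ε : ℝ) (p : ℝ × ℝ) : R3 :=
  (-(Mt h ν p - kap f ν h ν₁ ε p * Ft f h p)) • pu f p +
    (Lt f ν p - kap f ν h ν₁ ε p * Et f p) • h p

/-- The unit normal e = x/‖x‖ of the focal surface. -/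
def ej (f ν h ν₁ : ℝ × ℝ → R3) (ε : ℝ) (p : ℝ × ℝ) : R3 :=
  (norm3 (xj f ν h ν₁ ε p))⁻¹ • xj f ν h ν₁ ε p

/-- The limiting normal curvature κ_ν(u) = L̃(u,0). -/
def kν (f ν : ℝ × ℝ → R3) (u : ℝ) : ℝ := Lt f ν (u, 0)

/-- The cuspidal torsion κ_t(u) = M̃(u,0). -/
def kt (h ν : ℝ × ℝ → R3) (u : ℝ) : ℝ := Mt h ν (u, 0)

/-- The bias r_b(u) = 3Ñ₁(u,0). -/
def rb (h ν₁ : ℝ × ℝ → R3) (u : ℝ) : ℝ := 3 * Nt1 h ν₁ (u, 0)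

/-- The secondary cuspidal curvature r_c(u) = 24((Ñ₁)_v − 2F̃_vM̃ − G̃_vÑ₁)(u,0). -/
def rc (f ν h ν₁ : ℝ × ℝ → R3) (u : ℝ) : ℝ :=
  24 * (pv (Nt1 h ν₁) (u, 0) - 2 * pv (Ft f h) (u, 0) * Mt h ν (u, 0) -
    pv (Gt h) (u, 0) * Nt1 h ν₁ (u, 0))

/-- The singular curvature κ_s(u) = ⟨f_uu, h⟩(u,0). -/
def ks (f h : ℝ × ℝ → R3) (u : ℝ) : ℝ := dot3 (pu (pu f) (u, 0)) (h (u, 0))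

/-- The rank of the differential of `F` at `p`. -/
def rankAt (F : ℝ × ℝ → R3) (p : ℝ × ℝ) : ℕ :=
  Module.finrank ℝ (LinearMap.range (fderiv ℝ F p).toLinearMap)

/-!
Write `x = α f_u + β h` for the coefficients `α = -(M̃ - κF̃)`, `β = L̃ - κẼ`, so that the principal
field is `V = vα ∂_u + β ∂_v` and `Vf = v x`. Pairing `α ν_u + β ν₁ + κ x` with the frame
`f_u, h, ν` shows that it vanishes; this is Rodrigues' formula `Vν = -κ Vf`. Consequently, for
`C = f + ρν`, the terms `Vf + ρ Vν` cancel and `VC = (Vρ) ν`. On the other hand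
`⟨f_u, C_u⟩ = Ẽ - ρL̃ = -ρβ` is nonzero, whereas `⟨f_u, ν⟩ = 0`, so `C_u` is never a multiple of
`ν`. Since `V` and `∂_u` span the tangent plane (as `β ≠ 0`), the rank of `dC` drops exactly where
`Vρ = 0`.
-/

section LinearAlgebra

lemma finrank_range_lt_card_iff {K V W ι : Type*} [DivisionRing K] [AddCommGroup V] [Module K V]
    [AddCommGroup W] [Module K W] [Fintype ι] {v : ι → V} (hv : Submodule.span K (Set.range v) = ⊤)
    (T : V →ₗ[K] W) :
    Module.finrank K (LinearMap.range T) < Fintype.card ι ↔ ¬LinearIndependent K (T ∘ v) := by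
  rw [linearIndependent_iff_card_le_finrank_span, Set.finrank, Set.range_comp,
    Submodule.span_image, hv, Submodule.map_top, not_le]

lemma linearIndependent_pair_smul_right_iff {K W : Type*} [Field K] [AddCommGroup W] [Module K W]
    (φ : W →ₗ[K] K) {w n : W} {r : K} (hw : φ w ≠ 0) (hφn : φ n = 0) (hn : n ≠ 0) :
    LinearIndependent K ![w, r • n] ↔ r ≠ 0 := by
  refine ⟨fun hli hr => hli.ne_zero 1 (by simp [hr]), fun hr => ?_⟩
  refine LinearIndependent.pair_iff.2 fun s t hst => ?_
  have hs : s = 0 := by simpa [hφn, hw] using congrArg φ hst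
  exact ⟨hs, by simpa [hs, hr, hn] using hst⟩

lemma eq_zero_of_forall_dotProduct_eq_zero {K ι : Type*} [Field K] [Fintype ι]
    {b : ι → ι → K} (hb : LinearIndependent K b) {w : ι → K} (hw : ∀ i, b i ⬝ᵥ w = 0) : w = 0 := by
  classical
  have hunit : IsUnit (Matrix.of b) := Matrix.linearIndependent_rows_iff_isUnit.1 hb
  exact Matrix.mulVec_injective_of_isUnit hunit ((funext hw).trans (Matrix.mulVec_zero _).symm)

lemma span_pair_prod_eq_top {K : Type*} [Field K] (s : K) {t : K} (ht : t ≠ 0) :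
    Submodule.span K (Set.range ![((1, 0) : K × K), (s, t)]) = ⊤ := by
  have hli : LinearIndependent K ![((1, 0) : K × K), (s, t)] := by
    refine LinearIndependent.pair_iff.2 fun a b hab => ?_
    obtain ⟨ha, hb⟩ : a + b * s = 0 ∧ b = 0 := by simpa [ht] using hab
    exact ⟨by simpa [hb] using ha, hb⟩
  exact hli.span_eq_top_of_card_eq_finrank (by simp)

lemma dot3_eq_dotProduct (a b : R3) : dot3 a b = a ⬝ᵥ b := by
  simp only [dot3, dotProduct, Fin.sum_univ_three]

lemma dot3_comm (a b : R3) : dot3 a b = dot3 b a := by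
  simp only [dot3_eq_dotProduct, dotProduct_comm]

lemma dot3_gram_det_ne_zero {a b : R3} (hab : LinearIndependent ℝ ![a, b]) :
    dot3 a a * dot3 b b - dot3 a b ^ 2 ≠ 0 := by
  have lagrange : dot3 a a * dot3 b b - dot3 a b ^ 2 = crossProduct a b ⬝ᵥ crossProduct a b := by
    rw [cross_dot_cross, dotProduct_comm b a]
    simp only [dot3_eq_dotProduct, sq]
  rw [lagrange, Ne, dotProduct_self_eq_zero]
  exact crossProduct_ne_zero_iff_linearIndependent.2 hab

end LinearAlgebra

section Calculus

lemma eq_zero_of_forall_snd_mul_eq_zero {X 𝕜 : Type*} [TopologicalSpace X]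
    [NontriviallyNormedField 𝕜] {g : X × 𝕜 → 𝕜} (hg : Continuous g)
    (hzero : ∀ p, p.2 * g p = 0) (p : X × 𝕜) : g p = 0 := by
  have hdense : Dense (Prod.snd ⁻¹' {0}ᶜ : Set (X × 𝕜)) :=
    (dense_compl_singleton (0 : 𝕜)).preimage isOpenMap_snd
  have hg0 : g = fun _ => 0 := hg.ext_on hdense continuous_const fun q hq =>
    (mul_eq_zero.1 (hzero q)).resolve_left hq
  exact congrFun hg0 p

section

variable {E E' : Type*} [NormedAddCommGroup E] [NormedSpace ℝ E] [NormedAddCommGroup E']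
  [NormedSpace ℝ E']

lemma differentiableAt_div {c d : E → ℝ} {p : E} (hc : DifferentiableAt ℝ c p)
    (hd : DifferentiableAt ℝ d p) (hp : d p ≠ 0) : DifferentiableAt ℝ (fun q => c q / d q) p := by
  simpa only [div_eq_mul_inv] using hc.fun_mul (hd.fun_inv hp)

lemma differentiable_dot3 {F G : E → R3} (hF : Differentiable ℝ F) (hG : Differentiable ℝ G) :
    Differentiable ℝ fun p => dot3 (F p) (G p) := by
  unfold dot3
  fun_prop

lemma fderiv_dot3_apply {F G : E → R3} {p : E} (hF : DifferentiableAt ℝ F p)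
    (hG : DifferentiableAt ℝ G p) (w : E) :
    fderiv ℝ (fun q => dot3 (F q) (G q)) p w =
      dot3 (fderiv ℝ F p w) (G p) + dot3 (F p) (fderiv ℝ G p w) := by
  have hF' := hasFDerivAt_pi'.1 hF.hasFDerivAt
  have hG' := hasFDerivAt_pi'.1 hG.hasFDerivAt
  have hdot : HasFDerivAt (fun q => dot3 (F q) (G q)) _ p :=
    (((hF' 0).mul (hG' 0)).add ((hF' 1).mul (hG' 1))).add ((hF' 2).mul (hG' 2))
  rw [hdot.fderiv]
  simp only [dot3, add_apply, smul_apply, ContinuousLinearMap.comp_apply,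
    ContinuousLinearMap.proj_apply, smul_eq_mul]
  ring

lemma dot3_fderiv_add_dot3_fderiv_eq_zero {F G : E → R3} (hF : Differentiable ℝ F)
    (hG : Differentiable ℝ G) {c : ℝ} (hc : ∀ p, dot3 (F p) (G p) = c) (p w : E) :
    dot3 (fderiv ℝ F p w) (G p) + dot3 (F p) (fderiv ℝ G p w) = 0 := by
  simp [← fderiv_dot3_apply (hF p) (hG p) w, hc]

lemma differentiable_fderiv_apply {F : E → E'} (hF : ContDiff ℝ 2 F) (w : E) :
    Differentiable ℝ fun p => fderiv ℝ F p w :=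
  ((hF.fderiv_right (m := 1) (by norm_num)).clm_apply contDiff_const).differentiable one_ne_zero

lemma pv_pu_eq_pu_pv {F : ℝ × ℝ → E} (hF : ContDiff ℝ 2 F) (p : ℝ × ℝ) :
    pv (pu F) p = pu (pv F) p := by
  have hF' : DifferentiableAt ℝ (fderiv ℝ F) p :=
    (hF.fderiv_right (m := 1) (by norm_num)).differentiable one_ne_zero p
  have second (a b : ℝ × ℝ) :
      fderiv ℝ (fun q => fderiv ℝ F q a) p b = fderiv ℝ (fderiv ℝ F) p b a := by
    simp [fderiv_clm_apply hF' (differentiableAt_const a)]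
  have hsymm : IsSymmSndFDerivAt ℝ F p := hF.contDiffAt.isSymmSndFDerivAt (by simp)
  exact (second _ _).trans ((hsymm _ _).trans (second _ _).symm)

end

lemma rankAt_le_one_iff {F : ℝ × ℝ → R3} {q : ℝ × ℝ} (s : ℝ) {t : ℝ} (ht : t ≠ 0) :
    rankAt F q ≤ 1 ↔ ¬LinearIndependent ℝ ![pu F q, fderiv ℝ F q (s, t)] := by
  have himage : (fderiv ℝ F q).toLinearMap ∘ ![(1, 0), (s, t)] =
      ![pu F q, fderiv ℝ F q (s, t)] := by
    ext i : 1
    fin_cases i <;> rfl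
  rw [← himage, ← finrank_range_lt_card_iff (span_pair_prod_eq_top s ht), Fintype.card_fin]
  exact Nat.lt_succ_iff.symm

end Calculus

/-- A pure frontal `f` of class `C²` with unit normal `ν`, where `f_v = v·h` and `ν_v = v·ν₁`: the
setup of `AdaptedPureFrontal` without the normalisation of the frame `{f_u, h, ν}` along `v = 0`. -/
structure PureFrontal (f ν h ν₁ : ℝ × ℝ → R3) : Prop where
  contDiff_f : ContDiff ℝ 2 f
  contDiff_ν : ContDiff ℝ 2 ν
  differentiable_h : Differentiable ℝ h
  differentiable_ν₁ : Differentiable ℝ ν₁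
  unit_ν : ∀ p, dot3 (ν p) (ν p) = 1
  orth_fu_ν : ∀ p, dot3 (pu f p) (ν p) = 0
  orth_fv_ν : ∀ p, dot3 (pv f p) (ν p) = 0
  fv_eq : ∀ p : ℝ × ℝ, pv f p = p.2 • h p
  νv_eq : ∀ p : ℝ × ℝ, pv ν p = p.2 • ν₁ p
  indep : ∀ p, LinearIndependent ℝ ![pu f p, h p, ν p]

lemma AdaptedPureFrontal.pureFrontal {f ν h ν₁ : ℝ × ℝ → R3} (H : AdaptedPureFrontal f ν h ν₁) :
    PureFrontal f ν h ν₁ where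
  contDiff_f := H.smooth_f.of_le (WithTop.coe_le_coe.2 le_top)
  contDiff_ν := H.smooth_ν.of_le (WithTop.coe_le_coe.2 le_top)
  differentiable_h := H.smooth_h.differentiable (by simp)
  differentiable_ν₁ := H.smooth_ν₁.differentiable (by simp)
  unit_ν := H.unit_ν
  orth_fu_ν := H.orth_fu_ν
  orth_fv_ν := H.orth_fv_ν
  fv_eq := H.fv_eq
  νv_eq := H.νv_eq
  indep := H.indep

section PrincipalField

variable {f ν h ν₁ : ℝ × ℝ → R3} {ε : ℝ} {q : ℝ × ℝ}

lemma VD_eq_fderiv {E : Type*} [NormedAddCommGroup E] [NormedSpace ℝ E] (g : ℝ × ℝ → E) :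
    VD f ν h ν₁ ε g q = fderiv ℝ g q (V1c f ν h ν₁ ε q, V2c f ν h ν₁ ε q) := by
  simp only [VD, pu, pv, ← map_smul, ← map_add]
  simp

namespace PureFrontal

variable (S : PureFrontal f ν h ν₁)
include S

lemma differentiable_ν : Differentiable ℝ ν := S.contDiff_ν.differentiable two_ne_zero

lemma differentiable_fu : Differentiable ℝ (pu f) := differentiable_fderiv_apply S.contDiff_f _

lemma differentiable_νu : Differentiable ℝ (pu ν) := differentiable_fderiv_apply S.contDiff_ν _

lemma dot3_h_ν (p : ℝ × ℝ) : dot3 (h p) (ν p) = 0 := by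
  refine eq_zero_of_forall_snd_mul_eq_zero (g := fun p => dot3 (h p) (ν p))
    (differentiable_dot3 S.differentiable_h S.differentiable_ν).continuous (fun p => ?_) p
  simpa only [S.fv_eq, dot3_eq_dotProduct, smul_dotProduct, smul_eq_mul] using S.orth_fv_ν p

lemma dot3_ν_fderiv_ν (p w : ℝ × ℝ) : dot3 (ν p) (fderiv ℝ ν p w) = 0 := by
  have hsum :=
    dot3_fderiv_add_dot3_fderiv_eq_zero S.differentiable_ν S.differentiable_ν S.unit_ν p w
  rw [dot3_comm (fderiv ℝ ν p w)] at hsum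
  linarith

lemma dot3_ν_ν₁ (p : ℝ × ℝ) : dot3 (ν p) (ν₁ p) = 0 := by
  refine eq_zero_of_forall_snd_mul_eq_zero (g := fun p => dot3 (ν p) (ν₁ p))
    (differentiable_dot3 S.differentiable_ν S.differentiable_ν₁).continuous (fun p => ?_) p
  have horth : dot3 (ν p) (pv ν p) = 0 := S.dot3_ν_fderiv_ν p (0, 1)
  simpa only [S.νv_eq, dot3_eq_dotProduct, dotProduct_smul, smul_eq_mul] using horth

lemma dot3_fu_ν₁ (p : ℝ × ℝ) : dot3 (pu f p) (ν₁ p) = dot3 (h p) (pu ν p) := by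
  have hfv : Differentiable ℝ (pv f) := differentiable_fderiv_apply S.contDiff_f _
  refine sub_eq_zero.1 (eq_zero_of_forall_snd_mul_eq_zero
    (g := fun p => dot3 (pu f p) (ν₁ p) - dot3 (h p) (pu ν p))
    ((differentiable_dot3 S.differentiable_fu S.differentiable_ν₁).continuous.sub
      (differentiable_dot3 S.differentiable_h S.differentiable_νu).continuous) (fun p => ?_) p)
  have huv : dot3 (pv (pu f) p) (ν p) + dot3 (pu f p) (pv ν p) = 0 :=
    dot3_fderiv_add_dot3_fderiv_eq_zero S.differentiable_fu S.differentiable_ν S.orth_fu_ν p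
      (0, 1)
  have hvu : dot3 (pu (pv f) p) (ν p) + dot3 (pv f p) (pu ν p) = 0 :=
    dot3_fderiv_add_dot3_fderiv_eq_zero hfv S.differentiable_ν S.orth_fv_ν p (1, 0)
  rw [pv_pu_eq_pu_pv S.contDiff_f, S.νv_eq] at huv
  rw [S.fv_eq] at hvu
  simp only [dot3_eq_dotProduct, smul_dotProduct, dotProduct_smul, smul_eq_mul] at huv hvu ⊢
  linear_combination huv - hvu

lemma metric_det_ne_zero (p : ℝ × ℝ) : Et f p * Gt h p - Ft f h p ^ 2 ≠ 0 := by
  refine dot3_gram_det_ne_zero ?_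
  convert (S.indep p).comp Fin.castSucc (Fin.castSucc_injective 2) using 1
  ext i : 1
  fin_cases i <;> rfl

lemma differentiableAt_kap (hdisc : Hm f ν h ν₁ q ^ 2 - Kg f ν h ν₁ q ≠ 0) :
    DifferentiableAt ℝ (kap f ν h ν₁ ε) q := by
  have hE : Differentiable ℝ (Et f) :=
    differentiable_dot3 S.differentiable_fu S.differentiable_fu
  have hF : Differentiable ℝ (Ft f h) :=
    differentiable_dot3 S.differentiable_fu S.differentiable_h
  have hG : Differentiable ℝ (Gt h) :=
    differentiable_dot3 S.differentiable_h S.differentiable_h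
  have hL : Differentiable ℝ (Lt f ν) :=
    (differentiable_dot3 S.differentiable_fu S.differentiable_νu).neg
  have hM : Differentiable ℝ (Mt h ν) :=
    (differentiable_dot3 S.differentiable_h S.differentiable_νu).neg
  have hN : Differentiable ℝ (Nt1 h ν₁) :=
    (differentiable_dot3 S.differentiable_h S.differentiable_ν₁).neg
  have hdet := S.metric_det_ne_zero q
  have hHm : DifferentiableAt ℝ (Hm f ν h ν₁) q :=
    differentiableAt_div (by fun_prop) (by fun_prop) (mul_ne_zero two_ne_zero hdet)
  have hKg : DifferentiableAt ℝ (Kg f ν h ν₁) q :=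
    differentiableAt_div (by fun_prop) (by fun_prop) hdet
  exact hHm.add ((((hHm.pow 2).sub hKg).sqrt hdisc).const_mul ε)

lemma kap_characteristic_eq (hε : ε = 1 ∨ ε = -1)
    (hdisc : 0 ≤ Hm f ν h ν₁ q ^ 2 - Kg f ν h ν₁ q) :
    (Lt f ν q - kap f ν h ν₁ ε q * Et f q) * (Nt1 h ν₁ q - kap f ν h ν₁ ε q * Gt h q) =
      (Mt h ν q - kap f ν h ν₁ ε q * Ft f h q) ^ 2 := by
  have hdet := S.metric_det_ne_zero q
  have hκ : (kap f ν h ν₁ ε q - Hm f ν h ν₁ q) ^ 2 = Hm f ν h ν₁ q ^ 2 - Kg f ν h ν₁ q := by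
    rw [← Real.sq_sqrt hdisc, kap]
    rcases hε with rfl | rfl <;> ring
  have hHm : Hm f ν h ν₁ q * (2 * (Et f q * Gt h q - Ft f h q ^ 2)) =
      Et f q * Nt1 h ν₁ q - 2 * Ft f h q * Mt h ν q + Gt h q * Lt f ν q :=
    div_mul_cancel₀ _ (mul_ne_zero two_ne_zero hdet)
  have hKg : Kg f ν h ν₁ q * (Et f q * Gt h q - Ft f h q ^ 2) =
      Lt f ν q * Nt1 h ν₁ q - Mt h ν q ^ 2 := div_mul_cancel₀ _ hdet
  linear_combination (Et f q * Gt h q - Ft f h q ^ 2) * hκ - hKg + kap f ν h ν₁ ε q * hHm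

lemma V2c_ne_zero (hε : ε = 1 ∨ ε = -1) (hdisc : 0 ≤ Hm f ν h ν₁ q ^ 2 - Kg f ν h ν₁ q)
    (hx : xj f ν h ν₁ ε q ≠ 0) : V2c f ν h ν₁ ε q ≠ 0 := by
  intro hβ
  have hβ' : Lt f ν q - kap f ν h ν₁ ε q * Et f q = 0 := hβ
  have hα : Mt h ν q - kap f ν h ν₁ ε q * Ft f h q = 0 := by
    simpa [hβ'] using (S.kap_characteristic_eq hε hdisc).symm
  exact hx (by simp [xj, hα, hβ'])

lemma eq_zero_of_dot3_frame_eq_zero {w : R3} (hfu : dot3 (pu f q) w = 0) (hh : dot3 (h q) w = 0)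
    (hν : dot3 (ν q) w = 0) : w = 0 := by
  rw [dot3_eq_dotProduct] at hfu hh hν
  exact eq_zero_of_forall_dotProduct_eq_zero (S.indep q) (Fin.forall_fin_succ.2
    ⟨hfu, Fin.forall_fin_two.2 ⟨hh, hν⟩⟩)

lemma pu_ν_add_ν₁_eq_neg_kap_smul_xj (hε : ε = 1 ∨ ε = -1)
    (hdisc : 0 ≤ Hm f ν h ν₁ q ^ 2 - Kg f ν h ν₁ q) :
    (-(Mt h ν q - kap f ν h ν₁ ε q * Ft f h q)) • pu ν q +
        (Lt f ν q - kap f ν h ν₁ ε q * Et f q) • ν₁ q =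
      -(kap f ν h ν₁ ε q • xj f ν h ν₁ ε q) := by
  set κ := kap f ν h ν₁ ε q
  set α := -(Mt h ν q - κ * Ft f h q) with hα
  set β := Lt f ν q - κ * Et f q with hβ
  have hx : xj f ν h ν₁ ε q = α • pu f q + β • h q := rfl
  have pairing (a : R3) : dot3 a (α • pu ν q + β • ν₁ q + κ • xj f ν h ν₁ ε q) =
      α * (dot3 a (pu ν q) + κ * dot3 a (pu f q)) + β * (dot3 a (ν₁ q) + κ * dot3 a (h q)) := by
    simp only [hx, dot3_eq_dotProduct, dotProduct_add, dotProduct_smul, smul_eq_mul]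
    ring
  have hfu_νu : dot3 (pu f q) (pu ν q) = -Lt f ν q := by rw [Lt, neg_neg]
  have hh_νu : dot3 (h q) (pu ν q) = -Mt h ν q := by rw [Mt, neg_neg]
  have hfu_ν₁ : dot3 (pu f q) (ν₁ q) = -Mt h ν q := by rw [S.dot3_fu_ν₁, hh_νu]
  have hh_ν₁ : dot3 (h q) (ν₁ q) = -Nt1 h ν₁ q := by rw [Nt1, neg_neg]
  rw [← add_eq_zero_iff_eq_neg]
  apply S.eq_zero_of_dot3_frame_eq_zero
  · rw [pairing, hfu_νu, hfu_ν₁, ← Et, ← Ft, hα, hβ]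
    ring
  · rw [pairing, hh_νu, hh_ν₁, dot3_comm _ (pu f q), ← Ft, ← Gt, hα, hβ]
    linear_combination -S.kap_characteristic_eq hε hdisc
  · have hν_νu : dot3 (ν q) (pu ν q) = 0 := S.dot3_ν_fderiv_ν q (1, 0)
    rw [pairing, hν_νu, S.dot3_ν_ν₁, dot3_comm _ (pu f q), dot3_comm _ (h q), S.orth_fu_ν,
      S.dot3_h_ν]
    ring

lemma VD_f_eq_smul_xj : VD f ν h ν₁ ε f q = q.2 • xj f ν h ν₁ ε q := by
  rw [VD, S.fv_eq, V1c, V2c, xj]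
  module

lemma rodrigues_formula (hε : ε = 1 ∨ ε = -1)
    (hdisc : 0 ≤ Hm f ν h ν₁ q ^ 2 - Kg f ν h ν₁ q) :
    VD f ν h ν₁ ε ν q = -(kap f ν h ν₁ ε q • VD f ν h ν₁ ε f q) := by
  rw [S.VD_f_eq_smul_xj, smul_comm, ← smul_neg, ← S.pu_ν_add_ν₁_eq_neg_kap_smul_xj hε hdisc, VD,
    S.νv_eq, V1c, V2c]
  module

lemma fderiv_Cf_apply (hρ : DifferentiableAt ℝ (rho f ν h ν₁ ε) q) (w : ℝ × ℝ) :
    fderiv ℝ (Cf f ν h ν₁ ε) q w =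
      fderiv ℝ f q w +
        (rho f ν h ν₁ ε q • fderiv ℝ ν q w + fderiv ℝ (rho f ν h ν₁ ε) q w • ν q) := by
  have hf : DifferentiableAt ℝ f q := S.contDiff_f.differentiable two_ne_zero q
  have hC : HasFDerivAt (Cf f ν h ν₁ ε) _ q :=
    hf.hasFDerivAt.add (hρ.hasFDerivAt.smul (S.differentiable_ν q).hasFDerivAt)
  simp [hC.fderiv]

lemma VD_Cf_eq_VD_rho_smul_ν (hε : ε = 1 ∨ ε = -1)
    (hdisc : 0 ≤ Hm f ν h ν₁ q ^ 2 - Kg f ν h ν₁ q) (hκ : kap f ν h ν₁ ε q ≠ 0)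
    (hρ : DifferentiableAt ℝ (rho f ν h ν₁ ε) q) :
    VD f ν h ν₁ ε (Cf f ν h ν₁ ε) q = VD f ν h ν₁ ε (rho f ν h ν₁ ε) q • ν q := by
  have hcancel : VD f ν h ν₁ ε f q + rho f ν h ν₁ ε q • VD f ν h ν₁ ε ν q = 0 := by
    rw [S.rodrigues_formula hε hdisc, smul_neg, rho, inv_smul_smul₀ hκ, add_neg_cancel]
  rw [VD_eq_fderiv, S.fderiv_Cf_apply hρ]
  simp only [← VD_eq_fderiv]
  rw [← add_assoc, hcancel, zero_add]

lemma dot3_fu_pu_Cf (hκ : kap f ν h ν₁ ε q ≠ 0)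
    (hρ : DifferentiableAt ℝ (rho f ν h ν₁ ε) q) :
    dot3 (pu f q) (pu (Cf f ν h ν₁ ε) q) = -(rho f ν h ν₁ ε q * V2c f ν h ν₁ ε q) := by
  have hρκ : rho f ν h ν₁ ε q * kap f ν h ν₁ ε q = 1 := inv_mul_cancel₀ hκ
  have hexpand : dot3 (pu f q) (pu (Cf f ν h ν₁ ε) q) =
      Et f q + (rho f ν h ν₁ ε q * -Lt f ν q +
        pu (rho f ν h ν₁ ε) q * dot3 (pu f q) (ν q)) := by
    rw [show pu (Cf f ν h ν₁ ε) q = _ from S.fderiv_Cf_apply hρ (1, 0)]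
    simp only [Et, Lt, pu, neg_neg, dot3_eq_dotProduct, dotProduct_add, dotProduct_smul,
      smul_eq_mul]
  rw [hexpand, S.orth_fu_ν, V2c]
  linear_combination -Et f q * hρκ

end PureFrontal

end PrincipalField

theorem stmt_10_general {f ν h ν₁ : ℝ × ℝ → R3} (S : PureFrontal f ν h ν₁)
    {ε : ℝ} (hε : ε = 1 ∨ ε = -1) {q : ℝ × ℝ}
    (hdisc : 0 < Hm f ν h ν₁ q ^ 2 - Kg f ν h ν₁ q)
    (hκ : kap f ν h ν₁ ε q ≠ 0) (hx : xj f ν h ν₁ ε q ≠ 0) :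
    rankAt (Cf f ν h ν₁ ε) q ≤ 1 ↔ VD f ν h ν₁ ε (rho f ν h ν₁ ε) q = 0 := by
  have hρ : DifferentiableAt ℝ (rho f ν h ν₁ ε) q := (S.differentiableAt_kap hdisc.ne').inv hκ
  have hβ : V2c f ν h ν₁ ε q ≠ 0 := S.V2c_ne_zero hε hdisc.le hx
  have hCu : dot3 (pu f q) (pu (Cf f ν h ν₁ ε) q) ≠ 0 := by
    rw [S.dot3_fu_pu_Cf hκ hρ]
    exact neg_ne_zero.2 (mul_ne_zero (inv_ne_zero hκ) hβ)
  have hν : ν q ≠ 0 := fun hν0 => by simpa [hν0, dot3] using S.unit_ν q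
  have hindep : LinearIndependent ℝ
      ![pu (Cf f ν h ν₁ ε) q, VD f ν h ν₁ ε (rho f ν h ν₁ ε) q • ν q] ↔
      VD f ν h ν₁ ε (rho f ν h ν₁ ε) q ≠ 0 :=
    linearIndependent_pair_smul_right_iff (dotProductBilin ℝ ℝ (pu f q))
      (by rwa [dot3_eq_dotProduct] at hCu)
      ((dot3_eq_dotProduct _ _).symm.trans (S.orth_fu_ν q)) hν
  rw [rankAt_le_one_iff (V1c f ν h ν₁ ε q) hβ, ← VD_eq_fderiv,
    S.VD_Cf_eq_VD_rho_smul_ν hε hdisc.le hκ hρ, hindep, not_not]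

/-- a point q is a singular point of the focal surface C_j iff
(V_jρ_j)(q) = 0. -/
theorem stmt_10 (f ν h ν₁ : ℝ × ℝ → R3) (H : AdaptedPureFrontal f ν h ν₁)
    (ε : ℝ) (hε : ε = 1 ∨ ε = -1)
    (hHK : ∀ p : ℝ × ℝ, Hm f ν h ν₁ p ^ 2 - Kg f ν h ν₁ p > 0)
    (hκ : ∀ p : ℝ × ℝ, kap f ν h ν₁ ε p ≠ 0)
    (hx : ∀ p : ℝ × ℝ, xj f ν h ν₁ ε p ≠ 0) :
    ∀ q : ℝ × ℝ,
      rankAt (Cf f ν h ν₁ ε) q ≤ 1 ↔ VD f ν h ν₁ ε (rho f ν h ν₁ ε) q = 0 :=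
  fun q => stmt_10_general H.pureFrontal hε (hHK q) (hκ q) (hx q)
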